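/- arXiv:1203.5135 — 2 statements merged into one kernel-verified Lean document; each statement's English description precedes it below -/
import Mathlib

section
/- Let (T, ξ_T, I_T) be an i'-overlapping tree for some i' ∈ {1,2,3,4}, let i ∈ {1,2,3,4} with i ≠ i', and let ω_T be the dyadic interval of length |I_T|^{-1} containing ξ_T, p_T = I_T × ω_T. Set ν = 0 if {i, i'} = {1,2} or {i, i'} = {3,4}, and ν = 1 otherwise. Then for every integer k and all real coefficients (c_P)_{P∈T} one has the pointwise identity ∑_{P ∈ T : |I_P| > 2^{k+ν}} c_P φ_{P_i} = sgn(φ_{p_T}) · A_k[ sgn(φ_{p_T}) ∑_{P ∈ T} c_P φ_{P_i} ]. -/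
open MeasureTheory Set
open scoped ENNReal

noncomputable section

/-- A dyadic interval `[n 2^k, (n+1) 2^k) ⊆ [0,∞)`. -/
structure DyadicInterval where
  n : ℕ
  k : ℤ
  deriving DecidableEq

namespace DyadicInterval

/-- The length `2^k` of a dyadic interval. -/
def len (I : DyadicInterval) : ℝ := 2 ^ I.k

/-- The left endpoint `n 2^k` of a dyadic interval. -/
def lo (I : DyadicInterval) : ℝ := I.n * 2 ^ I.k

/-- A dyadic interval as a subset of `ℝ`. -/
def toSet (I : DyadicInterval) : Set ℝ := Set.Ico I.lo (I.lo + I.len)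

end DyadicInterval

/-- The Walsh function of index `m` (Paley ordering): for `y ∈ [0,1)` with binary digits
`y_i`, `W_m(y) = (-1)^{∑ m_i y_i}`. -/
def walshF (m : ℕ) (y : ℝ) : ℝ :=
  ∏ i ∈ Finset.range m, if m.testBit i then (-1 : ℝ) ^ ⌊y * 2 ^ (i + 1)⌋ else 1

/-- The Walsh wave packet of the rectangle `I × ω`.  For a tile (a rectangle of area one) this
is the unique family satisfying `φ_{I×[0,2^n)} = |I|^{-1/2} 1_I` together with the recursions
`φ_{I×ω_r} = (φ_{I_l×ω} − φ_{I_r×ω})/√2` and `φ_{I×ω_l} = (φ_{I_l×ω} + φ_{I_r×ω})/√2`. -/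
def wavePacket (I ω : DyadicInterval) (x : ℝ) : ℝ :=
  I.toSet.indicator (fun x => I.len ^ (-(1 : ℝ) / 2) * walshF ω.n ((x - I.lo) / I.len)) x

/-- `⟨f, g⟩ = ∫_0^∞ f g`. -/
def innerF (f g : ℝ → ℝ) : ℝ := ∫ x in Set.Ici (0 : ℝ), f x * g x

/-- A tile: a dyadic rectangle of area one. -/
structure Tile where
  I : DyadicInterval
  ω : DyadicInterval
  area : I.k + ω.k = 0

/-- The Walsh wave packet of a tile. -/
def Tile.wp (p : Tile) : ℝ → ℝ := wavePacket p.I p.ω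

/-- A tile as a subset of `[0,∞) × [0,∞)`. -/
def Tile.toSet (p : Tile) : Set (ℝ × ℝ) := p.I.toSet ×ˢ p.ω.toSet

/-- A quartile: a dyadic rectangle of area four. -/
structure Quartile where
  I : DyadicInterval
  ω : DyadicInterval
  area : I.k + ω.k = 2

namespace Quartile

/-- The frequency interval `ω_{P_{i+1}}` (the `i`-th dyadic grandchild of `ω_P`, `i : Fin 4`,
in increasing order). -/
def freq (P : Quartile) (i : Fin 4) : DyadicInterval := ⟨4 * P.ω.n + i.val, P.ω.k - 2⟩

/-- The tile `P_{i+1} = I_P × ω_{P_{i+1}}` as a subset of the plane, for `i : Fin 4`. -/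
def subtileSet (P : Quartile) (i : Fin 4) : Set (ℝ × ℝ) := P.I.toSet ×ˢ (P.freq i).toSet

/-- The Walsh wave packet `φ_{P_{i+1}}` for `i : Fin 4`. -/
def wp (P : Quartile) (i : Fin 4) : ℝ → ℝ := wavePacket P.I (P.freq i)

end Quartile

instance : DecidableEq Quartile := fun P Q =>
  decidable_of_iff (P.I = Q.I ∧ P.ω = Q.ω) (by cases P; cases Q; simp)

/-- `(T, ξ, I_T)` is a tree: `ξ ∈ [0,∞)` and every `P ∈ T` has `I_P ⊆ I_T` and `ξ ∈ ω_P`. -/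
def IsTree (T : Finset Quartile) (ξ : ℝ) (It : DyadicInterval) : Prop :=
  0 ≤ ξ ∧ ∀ P ∈ T, P.I.toSet ⊆ It.toSet ∧ ξ ∈ P.ω.toSet

/-- An `i`-overlapping tree (`i : Fin 4` indexes `P_1,…,P_4`): `ξ_T ∈ ω_{P_{i+1}}` for all `P`. -/
def IsOverlapping (i : Fin 4) (T : Finset Quartile) (ξ : ℝ) (It : DyadicInterval) : Prop :=
  IsTree T ξ It ∧ ∀ P ∈ T, ξ ∈ (P.freq i).toSet

/-- An `i`-lacunary tree: `j`-overlapping for some `j ≠ i`. -/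
def IsLacunary (i : Fin 4) (T : Finset Quartile) (ξ : ℝ) (It : DyadicInterval) : Prop :=
  ∃ j, j ≠ i ∧ IsOverlapping j T ξ It

/-- `ω_T`: the dyadic interval of length `|I_T|⁻¹` containing `ξ`; `p_T = I_T × ω_T`. -/
def topFreq (It : DyadicInterval) (ξ : ℝ) : DyadicInterval := ⟨(⌊ξ * 2 ^ It.k⌋).toNat, -It.k⟩

/-- The dyadic interval of length `2^k` containing `x ≥ 0`. -/
def dyadicPiece (k : ℤ) (x : ℝ) : Set ℝ :=
  Set.Ico ((⌊x / 2 ^ k⌋ : ℝ) * 2 ^ k) (((⌊x / 2 ^ k⌋ : ℝ) + 1) * 2 ^ k)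

/-- The dyadic averaging operator `A_k[f](x) = |I|⁻¹ ∫_I f` with `I ∋ x` dyadic, `|I| = 2^k`. -/
def dyadicAvg (k : ℤ) (f : ℝ → ℝ) (x : ℝ) : ℝ :=
  ((2 : ℝ) ^ k)⁻¹ * ∫ y in dyadicPiece k x, f y

/-- The `r`-variation seminorm of `g : ℤ → ℝ` over the index set `S ⊆ ℤ`:
the supremum of `(∑_{j=1}^N |g(k_j) − g(k_{j−1})|^r)^{1/r}` over finite increasing
sequences `k_0 < ⋯ < k_N` in `S`. -/
def varNorm (r : ℝ) (S : Set ℤ) (g : ℤ → ℝ) : ℝ≥0∞ :=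
  ⨆ (N : ℕ) (k : ℕ → ℤ) (_ : StrictMono k) (_ : ∀ j ≤ N, k j ∈ S),
    (∑ j ∈ Finset.range N, ENNReal.ofReal (|g (k (j + 1)) - g (k j)| ^ r)) ^ (1 / r)

/-- The dyadic `L^t` Hardy–Littlewood maximal operator `M^t[f](x) = sup_k (A_k[|f|^t](x))^{1/t}`. -/
def maxOp (t : ℝ) (f : ℝ → ℝ) (x : ℝ) : ℝ≥0∞ :=
  ⨆ k : ℤ, ((ENNReal.ofReal ((2 : ℝ) ^ k))⁻¹ *
    ∫⁻ y in dyadicPiece k x, ENNReal.ofReal (|f y| ^ t)) ^ (1 / t)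

/-- Given a strictly increasing `kk : ℤ → ℤ` and coefficients `a : ℤ → ℝ`, the coefficient
`a_m` where `m` is the (unique) integer with `kk (m-1) ≤ K < kk m` (`K = log₂|I_P|`),
and `0` if no such `m` exists. -/
def linCoeff (kk : ℤ → ℤ) (a : ℤ → ℝ) (K : ℤ) : ℝ :=
  letI := Classical.propDecidable (∃ m : ℤ, kk (m - 1) ≤ K ∧ K < kk m)
  if h : ∃ m : ℤ, kk (m - 1) ≤ K ∧ K < kk m then a h.choose else 0

/-- Linearization data for the `r`-variation: measurably in `x`, a strictly increasing
sequence of integers `k_j(x)` and coefficients `a_j(x)` with `∑_j |a_j(x)|^{r'} ≤ 1`,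
`r' = r/(r-1)`. -/
structure LinData (r : ℝ) where
  kseq : ℝ → ℤ → ℤ
  aseq : ℝ → ℤ → ℝ
  mono : ∀ x, StrictMono (kseq x)
  meas_k : ∀ j, Measurable fun x => kseq x j
  meas_a : ∀ j, Measurable fun x => aseq x j
  abound : ∀ x, ∀ s : Finset ℤ, ∑ j ∈ s, |aseq x j| ^ (r / (r - 1)) ≤ 1

/-- `a_P(x)` for a quartile `P`. -/
def LinData.coeff {r : ℝ} (L : LinData r) (P : Quartile) (x : ℝ) : ℝ :=
  linCoeff (L.kseq x) (L.aseq x) P.I.k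

/-- The modified wave packets: `φ̃_{P_3}(x) = a_P(x) φ_{P_3}(x)` and `φ̃_{P_i} = φ_{P_i}`
for `i ≠ 3` (here `i : Fin 4`, so index `2` plays the role of `3`). -/
def LinData.wp {r : ℝ} (L : LinData r) (P : Quartile) (i : Fin 4) (x : ℝ) : ℝ :=
  (if i = (2 : Fin 4) then L.coeff P x else 1) * P.wp i x

/-- `size_i(Ps, f)`: the sup of `(|I_T|⁻¹ ∑_{P ∈ T} |⟨f, φ̃_{P_i}⟩|²)^{1/2}` over
`i`-lacunary trees `T ⊆ Ps`. -/
def treeSize {r : ℝ} (L : LinData r) (i : Fin 4) (Ps : Set Quartile) (f : ℝ → ℝ) : ℝ≥0∞ :=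
  ⨆ (T : Finset Quartile) (ξ : ℝ) (It : DyadicInterval)
    (_ : IsLacunary i T ξ It) (_ : (T : Set Quartile) ⊆ Ps),
    ENNReal.ofReal ((It.len)⁻¹ * ∑ P ∈ T, innerF f (L.wp P i) ^ 2) ^ ((1 : ℝ) / 2)

/-- Lebesgue measure restricted to `[0,∞)`. -/
def mu0 : Measure ℝ := volume.restrict (Set.Ici 0)

end

/-!
Both sides are sums over `P ∈ T`, so only one packet matters at a time.  Writing `z = x / |I_T|` and
`|I_T| = 2^s |I_P|`, every Walsh packet in sight is, up to a positive factor, a Walsh function of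
`z` cut off to a dyadic interval: `sgn φ_{p_T}` is `W_M(z)` with `M` the index of `ω_T`, and
`φ_{P_i}` is `W_{2^s m_i}(z)` on `I_P`, with `m_i` the index of `ω_{P_i}`.  Since
`W_a W_b = W_{a xor b}`, the product of the two is again a Walsh function `W_n(z)` on `I_P`.
As `ξ ∈ ω_{P_{i'}}` means `⌊M / 2^s⌋ = m_{i'}`, the leading bits of `n` are
`m_{i'} xor m_i = i' xor i`, and the top bit of `n` is at position `s + ν`.

So `sgn(φ_{p_T}) φ_{P_i}` is constant on dyadic intervals of length `2^{-1-ν} |I_P|` and takes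
opposite values on dyadic siblings of that length.  Such a function is fixed by `A_k` if
`2^k ≤ 2^{-1-ν} |I_P|` and annihilated by `A_k` otherwise.
-/

/-! ### Dyadic step functions -/

section DyadicStep

/-- The dyadic interval `[N 2^k, (N+1) 2^k)` of the whole line; unlike in `DyadicInterval`, the
index `N` may be negative, as it may in `dyadicPiece`. -/
def dyadicIco (k N : ℤ) : Set ℝ := Ico ((N : ℝ) * 2 ^ k) (((N : ℝ) + 1) * 2 ^ k)

lemma mem_dyadicIco {k N : ℤ} {y : ℝ} : y ∈ dyadicIco k N ↔ ⌊y / 2 ^ k⌋ = N := by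
  have h : (0 : ℝ) < 2 ^ k := by positivity
  rw [dyadicIco, mem_Ico, Int.floor_eq_iff, le_div_iff₀ h, div_lt_iff₀ h]

lemma left_mem_dyadicIco (k N : ℤ) : (N : ℝ) * 2 ^ k ∈ dyadicIco k N := by
  rw [mem_dyadicIco, mul_div_cancel_right₀ _ (by positivity), Int.floor_intCast]

lemma measurableSet_dyadicIco (k N : ℤ) : MeasurableSet (dyadicIco k N) := measurableSet_Ico

lemma volume_real_dyadicIco (k N : ℤ) : volume.real (dyadicIco k N) = 2 ^ k := by
  have h : (0 : ℝ) < 2 ^ k := by positivity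
  rw [dyadicIco, add_one_mul, Real.volume_real_Ico_of_le (by linarith), add_sub_cancel_left]

lemma floor_div_two_zpow_add (k : ℤ) (s : ℕ) (y : ℝ) :
    ⌊y / 2 ^ (k + s)⌋ = ⌊y / 2 ^ k⌋ / 2 ^ s := by
  rw [zpow_add₀ two_ne_zero, zpow_natCast, ← div_div]
  exact_mod_cast Int.floor_div_natCast (y / 2 ^ k) (2 ^ s)

lemma floor_div_two_zpow_add_one (k : ℤ) (y : ℝ) : ⌊y / 2 ^ (k + 1)⌋ = ⌊y / 2 ^ k⌋ / 2 := by
  simpa using floor_div_two_zpow_add k 1 y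

lemma dyadicIco_add_one (k N : ℤ) :
    dyadicIco (k + 1) N = dyadicIco k (2 * N) ∪ dyadicIco k (2 * N + 1) := by
  ext y
  simp only [mem_union, mem_dyadicIco, floor_div_two_zpow_add_one]
  omega

lemma disjoint_dyadicIco (k : ℤ) {M N : ℤ} (h : M ≠ N) :
    Disjoint (dyadicIco k M) (dyadicIco k N) := by
  rw [Set.disjoint_left]
  intro y hM hN
  exact h ((mem_dyadicIco.1 hM).symm.trans (mem_dyadicIco.1 hN))

/-- `f` is constant on every dyadic interval of length `2^k`. -/
def IsDyadicStep {α : Type*} (k : ℤ) (f : ℝ → α) : Prop :=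
  f.FactorsThrough fun y : ℝ => ⌊y / 2 ^ k⌋

variable {E : Type*} [NormedAddCommGroup E]

namespace IsDyadicStep

lemma mono {α : Type*} {k l : ℤ} {f : ℝ → α} (hf : IsDyadicStep l f) (h : k ≤ l) :
    IsDyadicStep k f := by
  obtain ⟨s, rfl⟩ := Int.le.dest h
  intro x y hxy
  exact hf (by simp only [floor_div_two_zpow_add] at hxy ⊢; rw [hxy])

lemma eqOn_dyadicIco {α : Type*} {k N : ℤ} {f : ℝ → α} (hf : IsDyadicStep k f) {x : ℝ}
    (hx : x ∈ dyadicIco k N) : EqOn f (fun _ => f x) (dyadicIco k N) :=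
  fun _ hy => hf ((mem_dyadicIco.1 hy).trans (mem_dyadicIco.1 hx).symm)

lemma integrableOn_dyadicIco_self {k : ℤ} {f : ℝ → E} (hf : IsDyadicStep k f) (N : ℤ) :
    IntegrableOn f (dyadicIco k N) :=
  (integrableOn_const (by simp [dyadicIco])).congr_fun
    (hf.eqOn_dyadicIco (left_mem_dyadicIco k N)).symm (measurableSet_dyadicIco k N)

lemma integrableOn_dyadicIco {b : ℤ} {f : ℝ → E} (hf : IsDyadicStep b f) (k N : ℤ) :
    IntegrableOn f (dyadicIco k N) := by
  rcases le_total k b with hkb | hbk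
  · exact (hf.mono hkb).integrableOn_dyadicIco_self N
  · induction k, hbk using Int.leInduction generalizing N with
    | base => exact hf.integrableOn_dyadicIco_self N
    | succ k _ ih => rw [dyadicIco_add_one]; exact (ih _).union (ih _)

variable [NormedSpace ℝ E]

lemma setIntegral_dyadicIco [CompleteSpace E] {k N : ℤ} {f : ℝ → E} (hf : IsDyadicStep k f) {x : ℝ}
    (hx : x ∈ dyadicIco k N) : ∫ y in dyadicIco k N, f y = (2 ^ k : ℝ) • f x := by
  rw [setIntegral_congr_fun (measurableSet_dyadicIco k N) (hf.eqOn_dyadicIco hx),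
    setIntegral_const, volume_real_dyadicIco]

lemma setIntegral_dyadicIco_add_one {b : ℤ} {f : ℝ → E} (hf : IsDyadicStep b f) (k N : ℤ) :
    ∫ y in dyadicIco (k + 1) N, f y =
      (∫ y in dyadicIco k (2 * N), f y) + ∫ y in dyadicIco k (2 * N + 1), f y := by
  rw [dyadicIco_add_one]
  exact setIntegral_union (disjoint_dyadicIco k (by omega)) (measurableSet_dyadicIco _ _)
    (hf.integrableOn_dyadicIco _ _) (hf.integrableOn_dyadicIco _ _)

end IsDyadicStep

end DyadicStep

/-! ### Haar steps and dyadic averages -/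

/-- The Rademacher function of the whole line at scale `2^k`: it alternates between `1` and `-1` on
consecutive dyadic intervals of length `2^k`. -/
noncomputable def rademacher (k : ℤ) (y : ℝ) : ℝ := (-1) ^ ⌊y / 2 ^ k⌋

lemma isDyadicStep_rademacher (k : ℤ) : IsDyadicStep k (rademacher k) := fun x y h => by
  simp only [rademacher, h]

lemma rademacher_of_mem_even {k N : ℤ} {y : ℝ} (h : y ∈ dyadicIco k (2 * N)) :
    rademacher k y = 1 := by
  rw [rademacher, mem_dyadicIco.1 h, (even_two_mul N).neg_one_zpow]

lemma rademacher_of_mem_odd {k N : ℤ} {y : ℝ} (h : y ∈ dyadicIco k (2 * N + 1)) :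
    rademacher k y = -1 := by
  rw [rademacher, mem_dyadicIco.1 h, (odd_two_mul_add_one N).neg_one_zpow]

/-- `f` is a (locally finite) linear combination of Haar functions of the dyadic intervals of length
`2^{k+1}`: it is constant on dyadic intervals of length `2^k`, with opposite values on the two
halves of each dyadic interval of length `2^{k+1}`. -/
def IsHaarStep (k : ℤ) (f : ℝ → ℝ) : Prop :=
  ∃ g : ℝ → ℝ, IsDyadicStep (k + 1) g ∧ f = fun y => rademacher k y * g y

lemma IsDyadicStep.mul_isHaarStep {k : ℤ} {h f : ℝ → ℝ} (hh : IsDyadicStep (k + 1) h)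
    (hf : IsHaarStep k f) : IsHaarStep k fun y => h y * f y := by
  obtain ⟨g, hg, rfl⟩ := hf
  refine ⟨fun y => h y * g y, fun x y hxy => ?_, funext fun y => mul_left_comm _ _ _⟩
  simp only [hh hxy, hg hxy]

namespace IsHaarStep

variable {b k : ℤ} {f : ℝ → ℝ}

lemma const_mul (hf : IsHaarStep k f) (c : ℝ) : IsHaarStep k fun y => c * f y :=
  IsDyadicStep.mul_isHaarStep (h := fun _ => c) (fun _ _ _ => rfl) hf

lemma isDyadicStep (hf : IsHaarStep k f) : IsDyadicStep k f := by
  obtain ⟨g, hg, rfl⟩ := hf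
  intro x y hxy
  simp only [isDyadicStep_rademacher k hxy, hg.mono (lt_add_one k).le hxy]

lemma apply_sibling (hf : IsHaarStep k f) {N : ℤ} {x y : ℝ} (hx : x ∈ dyadicIco k (2 * N))
    (hy : y ∈ dyadicIco k (2 * N + 1)) : f y = -f x := by
  obtain ⟨g, hg, rfl⟩ := hf
  have hxy : g y = g x := hg (by
    simp only [floor_div_two_zpow_add_one, mem_dyadicIco.1 hx, mem_dyadicIco.1 hy]
    omega)
  simp only [rademacher_of_mem_even hx, rademacher_of_mem_odd hy, hxy, one_mul, neg_mul]

lemma setIntegral_dyadicIco_eq_zero (hf : IsHaarStep b f) (hbk : b < k) (N : ℤ) :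
    ∫ y in dyadicIco k N, f y = 0 := by
  induction k, hbk using Int.leInduction generalizing N with
  | base =>
    have hl := left_mem_dyadicIco b (2 * N)
    have hr := left_mem_dyadicIco b (2 * N + 1)
    rw [hf.isDyadicStep.setIntegral_dyadicIco_add_one, hf.isDyadicStep.setIntegral_dyadicIco hl,
      hf.isDyadicStep.setIntegral_dyadicIco hr, hf.apply_sibling hl hr, smul_neg, add_neg_cancel]
  | succ k _ ih => rw [hf.isDyadicStep.setIntegral_dyadicIco_add_one, ih, ih, add_zero]

end IsHaarStep

lemma dyadicPiece_eq_dyadicIco (k : ℤ) (x : ℝ) : dyadicPiece k x = dyadicIco k ⌊x / 2 ^ k⌋ := rfl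

lemma IsDyadicStep.dyadicAvg_eq_self {k : ℤ} {f : ℝ → ℝ} (hf : IsDyadicStep k f) (x : ℝ) :
    dyadicAvg k f x = f x := by
  rw [dyadicAvg, dyadicPiece_eq_dyadicIco, hf.setIntegral_dyadicIco (mem_dyadicIco.2 rfl),
    smul_eq_mul, inv_mul_cancel_left₀ (by positivity)]

lemma IsHaarStep.dyadicAvg_eq_ite {b : ℤ} {f : ℝ → ℝ} (hf : IsHaarStep b f) (k : ℤ) (x : ℝ) :
    dyadicAvg k f x = if k ≤ b then f x else 0 := by
  split_ifs with h
  · exact (hf.isDyadicStep.mono h).dyadicAvg_eq_self x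
  · rw [dyadicAvg, dyadicPiece_eq_dyadicIco, hf.setIntegral_dyadicIco_eq_zero (not_le.1 h),
      mul_zero]

lemma dyadicAvg_finsetSum {ι : Type*} (s : Finset ι) {f : ι → ℝ → ℝ} {k : ℤ} {x : ℝ}
    (hf : ∀ j ∈ s, IntegrableOn (f j) (dyadicPiece k x)) :
    dyadicAvg k (fun y => ∑ j ∈ s, f j y) x = ∑ j ∈ s, dyadicAvg k (f j) x := by
  simp only [dyadicAvg, integral_finsetSum s hf, Finset.mul_sum]

lemma dyadicAvg_finsetSum_isHaarStep {ι : Type*} (s : Finset ι) {f : ι → ℝ → ℝ} {b : ι → ℤ}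
    (hf : ∀ j ∈ s, IsHaarStep (b j) (f j)) (k : ℤ) (x : ℝ) :
    dyadicAvg k (fun y => ∑ j ∈ s, f j y) x = ∑ j ∈ s with k ≤ b j, f j x := by
  rw [dyadicAvg_finsetSum s fun j hj => (hf j hj).isDyadicStep.integrableOn_dyadicIco k _,
    Finset.sum_filter]
  exact Finset.sum_congr rfl fun j hj => (hf j hj).dyadicAvg_eq_ite k x

/-! ### Walsh functions -/

lemma walshF_eq_prod {m N : ℕ} (h : m < 2 ^ N) (y : ℝ) :
    walshF m y = ∏ i ∈ Finset.range N, if m.testBit i then (-1 : ℝ) ^ ⌊y * 2 ^ (i + 1)⌋ else 1 := by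
  have hbit : ∀ i, m.testBit i → i < m ∧ i < N := fun i hi =>
    have hle := Nat.ge_two_pow_of_testBit hi
    ⟨i.lt_two_pow_self.trans_le hle, (Nat.pow_lt_pow_iff_right one_lt_two).1 (hle.trans_lt h)⟩
  unfold walshF
  rw [← Finset.prod_filter, ← Finset.prod_filter]
  refine Finset.prod_congr (Finset.ext fun i => ?_) fun _ _ => rfl
  simp only [Finset.mem_filter, Finset.mem_range, and_congr_left_iff]
  exact fun hi => iff_of_true (hbit i hi).1 (hbit i hi).2

lemma walshF_zero (y : ℝ) : walshF 0 y = 1 := rfl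

lemma walshF_mul_walshF (m n : ℕ) (y : ℝ) : walshF m y * walshF n y = walshF (m ^^^ n) y := by
  have hm : m < 2 ^ (m + n) := m.lt_two_pow_self.trans_le (Nat.pow_le_pow_right two_pos (by omega))
  have hn : n < 2 ^ (m + n) := n.lt_two_pow_self.trans_le (Nat.pow_le_pow_right two_pos (by omega))
  rw [walshF_eq_prod hm, walshF_eq_prod hn, walshF_eq_prod (Nat.xor_lt_two_pow hm hn),
    ← Finset.prod_mul_distrib]
  refine Finset.prod_congr rfl fun i _ => ?_
  have hsq (j : ℤ) : (-1 : ℝ) ^ j * (-1) ^ j = 1 := by rw [← mul_zpow]; simp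
  rw [Nat.testBit_xor]
  cases m.testBit i <;> cases n.testBit i <;> simp [hsq]

lemma walshF_mul_self (m : ℕ) (y : ℝ) : walshF m y * walshF m y = 1 := by
  rw [walshF_mul_walshF, Nat.xor_self, walshF_zero]

lemma walshF_periodic (m : ℕ) : Function.Periodic (walshF m) 1 := by
  intro y
  refine Finset.prod_congr rfl fun i _ => ?_
  have hshift : (y + 1) * 2 ^ (i + 1) = y * 2 ^ (i + 1) + ((2 * 2 ^ i : ℤ) : ℝ) := by
    push_cast; ring
  rw [hshift, Int.floor_add_intCast, zpow_add₀ (by norm_num), (even_two_mul _).neg_one_zpow,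
    mul_one]

lemma walshF_two_pow_mul (s m : ℕ) (y : ℝ) : walshF (2 ^ s * m) y = walshF m (y * 2 ^ s) := by
  have hm : 2 ^ s * m < 2 ^ (s + m) := by
    rw [pow_add]; exact Nat.mul_lt_mul_of_pos_left m.lt_two_pow_self (by positivity)
  rw [walshF_eq_prod hm, Finset.prod_range_add, Finset.prod_eq_one, one_mul, walshF]
  · refine Finset.prod_congr rfl fun i _ => ?_
    rw [Nat.testBit_two_pow_mul]
    simp [pow_add, mul_assoc]
  · intro i hi
    rw [Nat.testBit_two_pow_mul]
    simp [Finset.mem_range.1 hi]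

lemma neg_one_zpow_floor_eq_rademacher (k : ℤ) (i : ℕ) (y : ℝ) :
    (-1 : ℝ) ^ ⌊y / 2 ^ k * 2 ^ (i + 1)⌋ = rademacher (k - (i + 1)) y := by
  rw [rademacher, zpow_sub₀ two_ne_zero, div_div_eq_mul_div, div_mul_eq_mul_div]
  norm_cast

/-- The factor of the top bit is the finest one; all the others are constant at the next coarser
scale. -/
lemma isHaarStep_walshF {m : ℕ} (hm : m ≠ 0) (k : ℤ) :
    IsHaarStep (k - (m.log2 + 1)) fun y => walshF m (y / 2 ^ k) := by
  refine ⟨fun y => ∏ i ∈ Finset.range m.log2,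
    if m.testBit i then rademacher (k - (i + 1)) y else 1, fun x y hxy => ?_, funext fun y => ?_⟩
  · refine Finset.prod_congr rfl fun i hi => ?_
    have hscale : k - (m.log2 + 1) + 1 ≤ k - (i + 1) := by
      have := Finset.mem_range.1 hi; omega
    rw [(isDyadicStep_rademacher _).mono hscale hxy]
  · simp only [walshF_eq_prod Nat.lt_log2_self, neg_one_zpow_floor_eq_rademacher]
    rw [Finset.prod_range_succ, Nat.testBit_log2 hm, if_pos rfl, mul_comm]

/-! ### Wave packets -/

namespace DyadicInterval

lemma toSet_eq_dyadicIco (I : DyadicInterval) : I.toSet = dyadicIco I.k I.n := by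
  simp only [toSet, lo, len, dyadicIco, add_one_mul, Int.cast_natCast]

lemma mem_toSet_iff {I : DyadicInterval} {y : ℝ} : y ∈ I.toSet ↔ ⌊y / 2 ^ I.k⌋ = I.n := by
  rw [toSet_eq_dyadicIco, mem_dyadicIco]

lemma exists_k_eq_add_of_toSet_subset {J I : DyadicInterval} (h : J.toSet ⊆ I.toSet) :
    ∃ s : ℕ, I.k = J.k + s := by
  have hle : volume.real (dyadicIco J.k J.n) ≤ volume.real (dyadicIco I.k I.n) := by
    rw [toSet_eq_dyadicIco, toSet_eq_dyadicIco] at h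
    exact measureReal_mono h (by simp [dyadicIco])
  rw [volume_real_dyadicIco, volume_real_dyadicIco,
    zpow_le_zpow_iff_right₀ (one_lt_two : (1 : ℝ) < 2)] at hle
  exact (Int.le.dest hle).imp fun _ => Eq.symm

lemma isDyadicStep_indicator_toSet {α : Type*} [Zero α] (I : DyadicInterval) (a : α) :
    IsDyadicStep I.k (I.toSet.indicator fun _ => a) := by
  intro x y hxy
  simp only [indicator, mem_toSet_iff] at hxy ⊢
  rw [hxy]

end DyadicInterval

/-- Dividing by `|I|` moves the left endpoint of `I` to an integer, a period of the Walsh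
functions. -/
lemma wavePacket_eq_indicator_mul (I ω : DyadicInterval) (x : ℝ) :
    wavePacket I ω x =
      I.toSet.indicator (fun _ => I.len ^ (-(1 : ℝ) / 2)) x * walshF ω.n (x / 2 ^ I.k) := by
  have hx : (x - I.lo) / I.len = x / 2 ^ I.k - I.n * 1 := by
    rw [DyadicInterval.lo, DyadicInterval.len]; field_simp
  simp only [wavePacket, indicator, hx, (walshF_periodic ω.n).sub_nat_mul_eq I.n, ite_mul, zero_mul]

lemma sign_wavePacket {I : DyadicInterval} {x : ℝ} (hx : x ∈ I.toSet) (ω : DyadicInterval) :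
    Real.sign (wavePacket I ω x) = walshF ω.n (x / 2 ^ I.k) := by
  have hpos : 0 < I.len ^ (-(1 : ℝ) / 2) := by rw [DyadicInterval.len]; positivity
  rw [wavePacket_eq_indicator_mul, indicator_of_mem hx]
  rcases mul_self_eq_one_iff.1 (walshF_mul_self ω.n (x / 2 ^ I.k)) with h | h
  · rw [h, mul_one, Real.sign_of_pos hpos]
  · rw [h, Real.sign_of_neg (by linarith)]

lemma sign_mul_sign_mul_wavePacket {I J : DyadicInterval} (hJI : J.toSet ⊆ I.toSet)
    (ω η : DyadicInterval) (x : ℝ) :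
    Real.sign (wavePacket I ω x) * (Real.sign (wavePacket I ω x) * wavePacket J η x) =
      wavePacket J η x := by
  by_cases hx : x ∈ J.toSet
  · rw [sign_wavePacket (hJI hx), ← mul_assoc, walshF_mul_self, one_mul]
  · simp [wavePacket, hx]

lemma sign_wavePacket_mul_wavePacket {I J : DyadicInterval} (hJI : J.toSet ⊆ I.toSet) {s : ℕ}
    (hs : I.k = J.k + s) (ω η : DyadicInterval) (x : ℝ) :
    Real.sign (wavePacket I ω x) * wavePacket J η x =
      J.toSet.indicator (fun _ => J.len ^ (-(1 : ℝ) / 2)) x *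
        walshF (ω.n ^^^ 2 ^ s * η.n) (x / 2 ^ I.k) := by
  by_cases hx : x ∈ J.toSet
  · have hxs : x / 2 ^ J.k = x / 2 ^ I.k * 2 ^ s := by
      rw [hs, zpow_add₀ two_ne_zero, zpow_natCast]; field_simp
    rw [sign_wavePacket (hJI hx), wavePacket_eq_indicator_mul, hxs, ← walshF_two_pow_mul,
      mul_left_comm, walshF_mul_walshF]
  · simp [wavePacket, hx]

lemma log2_eq_log2_div_two_pow_add {n s : ℕ} (h : n / 2 ^ s ≠ 0) :
    n.log2 = (n / 2 ^ s).log2 + s := by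
  have hs : s ≤ Nat.log 2 n :=
    Nat.le_log_of_pow_le one_lt_two (not_lt.1 fun hlt => h (Nat.div_eq_of_lt hlt))
  rw [Nat.log2_eq_log_two, Nat.log2_eq_log_two, Nat.log_div_base_pow, Nat.sub_add_cancel hs]

lemma isHaarStep_sign_wavePacket_mul_wavePacket {I J : DyadicInterval} (hJI : J.toSet ⊆ I.toSet)
    {s : ℕ} (hs : I.k = J.k + s) {ω η : DyadicInterval} (hne : ω.n / 2 ^ s ≠ η.n) :
    IsHaarStep (J.k - ((ω.n / 2 ^ s ^^^ η.n).log2 + 1))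
      fun y => Real.sign (wavePacket I ω y) * wavePacket J η y := by
  set n := ω.n ^^^ 2 ^ s * η.n
  have hdiv : n / 2 ^ s = ω.n / 2 ^ s ^^^ η.n := by
    rw [Nat.xor_div_two_pow, Nat.mul_div_cancel_left _ (by positivity)]
  have hdiv0 : n / 2 ^ s ≠ 0 := by rwa [hdiv, Nat.xor_ne_zero_iff]
  have hn0 : n ≠ 0 := fun h => hdiv0 (by rw [h, Nat.zero_div])
  have hscale : J.k - ((n / 2 ^ s).log2 + 1) = I.k - (n.log2 + 1) := by
    rw [log2_eq_log2_div_two_pow_add hdiv0]; push_cast; omega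
  rw [← hdiv, hscale]
  simp only [sign_wavePacket_mul_wavePacket hJI hs]
  exact ((J.isDyadicStep_indicator_toSet _).mono (by omega)).mul_isHaarStep
    (isHaarStep_walshF hn0 I.k)

/-! ### Trees -/

lemma topFreq_n_div_two_pow {I ω : DyadicInterval} {s : ℕ} (hs : I.k + ω.k = s) {ξ : ℝ}
    (hξ : ξ ∈ ω.toSet) : (topFreq I ξ).n / 2 ^ s = ω.n := by
  have hscale : ξ * 2 ^ I.k / (2 ^ s : ℕ) = ξ / 2 ^ ω.k := by
    rw [eq_sub_of_add_eq hs, zpow_sub₀ two_ne_zero, zpow_natCast]; push_cast; field_simp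
  rw [topFreq, Int.floor_toNat, ← Nat.floor_div_natCast, hscale, ← Int.floor_toNat,
    DyadicInterval.mem_toSet_iff.1 hξ, Int.toNat_natCast]

namespace Quartile

lemma freq_n_xor_freq_n (P : Quartile) (i j : Fin 4) :
    (P.freq i).n ^^^ (P.freq j).n = i.val ^^^ j.val := by
  have hdiv (l : Fin 4) : (P.freq l).n / 2 ^ 2 = P.ω.n := by simp only [freq]; omega
  have hmod (l : Fin 4) : (P.freq l).n % 2 ^ 2 = l.val := by simp only [freq]; omega
  rw [← Nat.div_add_mod (_ ^^^ _) (2 ^ 2), Nat.xor_div_two_pow, Nat.xor_mod_two_pow]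
  simp only [hdiv, hmod, Nat.xor_self, mul_zero, zero_add]

end Quartile

lemma log2_xor_val_fin_four : ∀ i j : Fin 4,
    (j.val ^^^ i.val).log2 = if (i.val < 2 ↔ j.val < 2) then 0 else 1 := by
  decide

lemma isHaarStep_sign_wavePacket_topFreq_mul_wp {i i' : Fin 4} (hne : i ≠ i') {P : Quartile} {ξ : ℝ}
    {It : DyadicInterval} (hsub : P.I.toSet ⊆ It.toSet) (hξ : ξ ∈ (P.freq i').toSet) :
    IsHaarStep (P.I.k - ((if (i.val < 2 ↔ i'.val < 2) then 0 else 1) + 1))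
      fun y => Real.sign (wavePacket It (topFreq It ξ) y) * P.wp i y := by
  obtain ⟨s, hs⟩ := DyadicInterval.exists_k_eq_add_of_toSet_subset hsub
  have hk : It.k + (P.freq i').k = s := by
    have := P.area
    simp only [Quartile.freq]
    omega
  have hdiv := topFreq_n_div_two_pow hk hξ
  have hindex : (topFreq It ξ).n / 2 ^ s ≠ (P.freq i).n := by
    rw [hdiv]
    simpa [Quartile.freq, Fin.val_inj] using hne.symm
  have hhaar := isHaarStep_sign_wavePacket_mul_wavePacket hsub hs hindex
  rw [hdiv, P.freq_n_xor_freq_n, log2_xor_val_fin_four i i'] at hhaar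
  exact_mod_cast hhaar

/-- **Claim 2.1.** Truncation of lacunary tree sums via dyadic averaging: if `T` is
`i'`-overlapping and `i ≠ i'`, with `ν = 0` when `{i,i'} = {1,2}` or `{3,4}` and `ν = 1`
otherwise, then `∑_{P ∈ T, |I_P| > 2^{k+ν}} c_P φ_{P_i}
  = sgn(φ_{p_T}) A_k[sgn(φ_{p_T}) ∑_{P ∈ T} c_P φ_{P_i}]`.
(Here `i, i' : Fin 4` index the tiles `P_1, …, P_4`.) -/
theorem truncation_of_tree_sums
    (i i' : Fin 4) (hne : i ≠ i') (T : Finset Quartile) (ξ : ℝ) (It : DyadicInterval)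
    (hT : IsOverlapping i' T ξ It)
    (ν : ℤ) (hν : ν = if (i.val < 2 ↔ i'.val < 2) then 0 else 1)
    (c : Quartile → ℝ) (k : ℤ) (x : ℝ) :
    ∑ P ∈ T.filter (fun P => k + ν < P.I.k), c P * P.wp i x =
      Real.sign (wavePacket It (topFreq It ξ) x) *
        dyadicAvg k
          (fun y => Real.sign (wavePacket It (topFreq It ξ) y) * ∑ P ∈ T, c P * P.wp i y) x := by
  obtain ⟨⟨-, htree⟩, hover⟩ := hT
  set σ : ℝ → ℝ := fun y => Real.sign (wavePacket It (topFreq It ξ) y)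
  have hhaar (P) (hP : P ∈ T) : IsHaarStep (P.I.k - (ν + 1)) fun y => c P * (σ y * P.wp i y) :=
    hν ▸ (isHaarStep_sign_wavePacket_topFreq_mul_wp hne (htree P hP).1 (hover P hP)).const_mul (c P)
  have hscale (P : Quartile) : k ≤ P.I.k - (ν + 1) ↔ k + ν < P.I.k := by omega
  calc ∑ P ∈ T with k + ν < P.I.k, c P * P.wp i x
      = ∑ P ∈ T with k + ν < P.I.k, σ x * (c P * (σ x * P.wp i x)) :=
        Finset.sum_congr rfl fun P hP => by
          rw [mul_left_comm]
          exact congrArg (c P * ·) (sign_mul_sign_mul_wavePacket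
            (htree P (Finset.mem_filter.1 hP).1).1 (topFreq It ξ) (P.freq i) x).symm
    _ = σ x * dyadicAvg k (fun y => ∑ P ∈ T, c P * (σ y * P.wp i y)) x := by
        rw [dyadicAvg_finsetSum_isHaarStep T hhaar, Finset.mul_sum]
        simp only [hscale]
    _ = σ x * dyadicAvg k (fun y => σ y * ∑ P ∈ T, c P * P.wp i y) x := by
        simp only [Finset.mul_sum, mul_left_comm]
end

section
/- If (T, ξ_T, I_T) is an i-lacunary tree for some i ∈ {1,2,3,4}, then the tiles {P_i : P ∈ T} are pairwise disjoint: for any two distinct quartiles P, P' ∈ T one has P_i ∩ P'_i = ∅. -/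
/-!
Suppose `P_i` and `P'_i` meet for two quartiles of an `i`-lacunary tree that is `j`-overlapping,
with `|ω_{P'}| = q |ω_P|` and `q = 2 ^ d`. By nestedness of dyadic intervals, the `t`-th quarter
of `ω_P` lies in the `t`-th quarter of `ω_{P'}` for both `t = i` and `t = j`. In units of
`|ω_P| / 4`, with `4u` the distance from the left endpoint of `ω_{P'}` to that of `ω_P`, this
inclusion reads `t (q - 1) ≤ 4u ≤ (t + 1) (q - 1)`. If `d > 0`, two different `t` can only satisfy
it if they are consecutive, with `4u = max i j * (q - 1)`; as `q - 1` is odd, `4` would then divide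
`max i j`, which is impossible for `0 < max i j < 4`. So `d = 0`, hence `ω_P = ω_{P'}` and
`|I_P| = |I_{P'}|`; as `I_P` and `I_{P'}` meet, they coincide.
-/

open MeasureTheory Set
open scoped ENNReal

namespace DyadicInterval

variable {I J : DyadicInterval} {x : ℝ}

theorem mem_toSet_iff_floor : x ∈ I.toSet ↔ ⌊x / 2 ^ I.k⌋ = I.n := by
  have hpos : (0 : ℝ) < 2 ^ I.k := by positivity
  rw [Int.floor_eq_iff, le_div_iff₀ hpos, div_lt_iff₀ hpos, add_one_mul]
  rfl

theorem n_div_two_pow_eq_of_mem {d : ℕ} (hk : J.k = I.k + d) (hI : x ∈ I.toSet)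
    (hJ : x ∈ J.toSet) : I.n / 2 ^ d = J.n := by
  rw [mem_toSet_iff_floor] at hI hJ
  have hdiv : x / 2 ^ J.k = x / 2 ^ I.k / (2 ^ d : ℕ) := by
    rw [hk, zpow_add₀ two_ne_zero, zpow_natCast, div_div, Nat.cast_pow, Nat.cast_ofNat]
  rw [hdiv, Int.floor_div_natCast, hI] at hJ
  exact_mod_cast hJ

theorem eq_of_k_eq_of_mem (hk : I.k = J.k) (hI : x ∈ I.toSet) (hJ : x ∈ J.toSet) : I = J := by
  have hn : I.n = J.n := by
    simpa using n_div_two_pow_eq_of_mem (d := 0) (by simpa using hk.symm) hI hJ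
  cases I
  cases J
  exact congr_arg₂ mk hn hk

end DyadicInterval

theorem eq_of_mul_add_div_eq {N q n n' i j : ℕ} (hN : N.Coprime (q - 1)) (hi : i < N) (hj : j < N)
    (hi_div : (N * n + i) / q = N * n' + i) (hj_div : (N * n + j) / q = N * n' + j) : i = j := by
  wlog! hij : i < j generalizing i j
  · rcases hij.lt_or_eq with hji | hji
    · exact (this hj hi hj_div hi_div hji).symm
    · exact hji.symm
  exfalso
  have hq : 0 < q - 1 := by
    refine Nat.pos_of_ne_zero fun hq => ?_
    rw [hq, Nat.coprime_zero_right] at hN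
    omega
  obtain ⟨r, rfl⟩ : ∃ r, q = r + 1 := ⟨q - 1, by omega⟩
  rw [Nat.add_sub_cancel] at hN hq
  have hlower : N * (n' * (r + 1)) + j * r ≤ N * n := by
    have := (Nat.le_div_iff_mul_le r.succ_pos).mp hj_div.ge
    linarith
  have hupper : N * n ≤ N * (n' * (r + 1)) + (i + 1) * r := by
    have := (Nat.div_lt_iff_lt_mul r.succ_pos).mp (Nat.lt_succ_of_le hi_div.le)
    linarith
  have hj_eq : j = i + 1 :=
    le_antisymm (Nat.le_of_mul_le_mul_right (by omega : j * r ≤ (i + 1) * r) hq) hij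
  have hdvd : N ∣ j * r := by
    rw [← hj_eq] at hupper
    rw [← Nat.dvd_add_right (Nat.dvd_mul_right N (n' * (r + 1))), le_antisymm hlower hupper]
    exact Nat.dvd_mul_right N n
  exact Nat.not_dvd_of_pos_of_lt (by omega) hj (hN.dvd_of_dvd_mul_right hdvd)

namespace Quartile

variable {P Q : Quartile} {i j : Fin 4}

theorem ω_eq_of_freq_eq (h : P.freq i = Q.freq i) : P.ω = Q.ω := by
  rcases P with ⟨I, ⟨n, k⟩, _⟩
  rcases Q with ⟨J, ⟨m, l⟩, _⟩
  simp only [freq, DyadicInterval.mk.injEq] at h ⊢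
  omega

theorem ω_eq_of_mem_freq (hij : i ≠ j) {η ξ : ℝ}
    (hηP : η ∈ (P.freq i).toSet) (hηQ : η ∈ (Q.freq i).toSet)
    (hξP : ξ ∈ (P.freq j).toSet) (hξQ : ξ ∈ (Q.freq j).toSet) : P.ω = Q.ω := by
  wlog hle : P.ω.k ≤ Q.ω.k generalizing P Q
  · exact (this hηQ hηP hξQ hξP (le_of_not_ge hle)).symm
  obtain ⟨d, hd⟩ := Int.le.dest hle
  have hk (t : Fin 4) : (Q.freq t).k = (P.freq t).k + d := by
    simp only [freq]
    omega
  have hd_zero : d = 0 := by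
    by_contra hd_ne
    have hcoprime : Nat.Coprime 4 (2 ^ d - 1) := by
      have hodd : Odd (2 ^ d - 1) :=
        Nat.Even.sub_odd Nat.one_le_two_pow (even_two.pow_of_ne_zero hd_ne) odd_one
      exact (Nat.coprime_two_left.mpr hodd).pow_left 2
    exact hij <| Fin.ext <| eq_of_mul_add_div_eq hcoprime i.isLt j.isLt
      (DyadicInterval.n_div_two_pow_eq_of_mem (hk i) hηP hηQ)
      (DyadicInterval.n_div_two_pow_eq_of_mem (hk j) hξP hξQ)
  have hfreq_k : (P.freq i).k = (Q.freq i).k := by simp [hk, hd_zero]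
  exact ω_eq_of_freq_eq (DyadicInterval.eq_of_k_eq_of_mem hfreq_k hηP hηQ)

theorem eq_of_ω_eq_of_mem (hω : P.ω = Q.ω) {x : ℝ} (hP : x ∈ P.I.toSet) (hQ : x ∈ Q.I.toSet) :
    P = Q := by
  have hI : P.I = Q.I := by
    refine DyadicInterval.eq_of_k_eq_of_mem ?_ hP hQ
    have hP_area := P.area
    rw [hω] at hP_area
    exact add_right_cancel (hP_area.trans Q.area.symm)
  cases P
  cases Q
  cases hω
  cases hI
  rfl

end Quartile

theorem lacunary_tree_tiles_disjoint_general {i j : Fin 4} (hji : j ≠ i) {S : Set Quartile} {ξ : ℝ}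
    (hξ : ∀ P ∈ S, ξ ∈ (P.freq j).toSet) : S.PairwiseDisjoint fun P => P.subtileSet i := by
  intro P hP Q hQ hPQ
  refine Set.disjoint_left.mpr ?_
  rintro ⟨x, η⟩ ⟨hxP, hηP⟩ ⟨hxQ, hηQ⟩
  have hω : P.ω = Q.ω := Quartile.ω_eq_of_mem_freq hji.symm hηP hηQ (hξ P hP) (hξ Q hQ)
  exact hPQ (Quartile.eq_of_ω_eq_of_mem hω hxP hxQ)

/-- In an `i`-lacunary tree, the tiles `{P_i : P ∈ T}` are pairwise disjoint. -/
theorem lacunary_tree_tiles_disjoint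
    (i : Fin 4) (T : Finset Quartile) (ξ : ℝ) (It : DyadicInterval)
    (hT : IsLacunary i T ξ It) :
    ∀ P ∈ T, ∀ P' ∈ T, P ≠ P' → Disjoint (P.subtileSet i) (P'.subtileSet i) := by
  obtain ⟨j, hji, -, hξ⟩ := hT
  exact fun P hP P' hP' => lacunary_tree_tiles_disjoint_general hji (S := T) hξ hP hP'
end
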